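/- For every real number t, ξ(1/2 + it) = 1/2 − (t² + 1/4) · ∫_1^∞ ψ(x) · x^{−3/4} · cos((t/2)·log x) dx; in particular ξ(1/2 + it) is real, i.e. Im ξ(1/2 + it) = 0. -/

import Mathlib

open Complex Set

/-- `ψ(x) = ∑_{n ≥ 1} exp(-π n² x)`. -/
noncomputable def jacobiPsi (x : ℝ) : ℝ :=
  ∑' n : ℕ, Real.exp (-Real.pi * ((n : ℝ) + 1) ^ 2 * x)

/-- Riemann's xi function `ξ(s) = (1/2) s (s-1) π^(-s/2) Γ(s/2) ζ(s)`. -/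
noncomputable def riemannXiFun (s : ℂ) : ℂ :=
  (1 / 2) * s * (s - 1) * (Real.pi : ℂ) ^ (-s / 2) * Complex.Gamma (s / 2) * riemannZeta s

/-!
The completed zeta function without its poles is the Mellin transform of the theta kernel with its
asymptotics at `0` and `∞` removed. Cutting the integral at `x = 1` and substituting `x ↦ 1 / x` on
`(0, 1)`, the functional equation of theta folds everything onto `(1, ∞)`, which gives Riemann's
formula with integrand `ψ(x) (x^(s/2 - 1) + x^((1 - s)/2 - 1))`. At `s = 1/2 + it` the two exponents
are `-3/4 ± it/2`, so the two powers combine into a cosine, while `s (s - 1) = -(t² + 1/4)`.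
-/

open MeasureTheory HurwitzZeta

section WeakFEPair

variable {E : Type*} [NormedAddCommGroup E] [NormedSpace ℂ E]

lemma mellinConvergent_comp_inv {f : ℝ → E} {s : ℂ} :
    MellinConvergent (fun x ↦ f x⁻¹) s ↔ MellinConvergent f (-s) := by
  simpa [Real.rpow_neg_one, div_neg] using
    MellinConvergent.comp_rpow (f := f) (s := s) (a := -1) (by norm_num)

/-- The restriction of `f - f₀` to `(1, ∞)`, extended by zero, for a weak functional-equation pair
`(f, g)` with constant term `f₀` at infinity. Riemann's splitting writes the modified function
`f_modif` through the tails of `f` and `g`, up to its value at `1`, which is `0` for all of them. -/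
noncomputable def fePairTail (P : WeakFEPair E) : ℝ → E :=
  (Ioi 1).indicator fun x ↦ P.f x - P.f₀

variable (P : WeakFEPair E)

lemma f_modif_eq_fePairTail_add_inv {x : ℝ} (hx : 0 < x) :
    P.f_modif x = fePairTail P x + P.ε • (x : ℂ) ^ (-P.k : ℂ) • fePairTail P.symm x⁻¹ := by
  have hpow : (x : ℂ) ^ (-P.k : ℂ) = ((x ^ (-P.k) : ℝ) : ℂ) := by
    rw [Complex.ofReal_cpow hx.le, Complex.ofReal_neg]
  have hfe : P.f x = (P.ε * ((x ^ (-P.k) : ℝ) : ℂ)) • P.g x⁻¹ := by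
    simpa [Real.inv_rpow hx.le, Real.rpow_neg hx.le] using P.h_feq x⁻¹ (inv_pos.2 hx)
  rcases lt_trichotomy x 1 with h | rfl | h
  · have hinv : 1 < x⁻¹ := (one_lt_inv₀ hx).2 h
    simp only [WeakFEPair.f_modif, fePairTail, Pi.add_apply, WeakFEPair.symm_f, WeakFEPair.symm_f₀]
    rw [indicator_of_notMem (notMem_Ioi.2 h.le),
      indicator_of_mem (mem_Ioo.2 ⟨hx, h⟩), indicator_of_mem (mem_Ioi.2 hinv), zero_add, zero_add,
      hfe, hpow, ← smul_sub, mul_smul]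
  · simp [WeakFEPair.f_modif, fePairTail]
  · have hinv : x⁻¹ ≤ 1 := inv_le_one_of_one_le₀ h.le
    simp [WeakFEPair.f_modif, fePairTail, h, hinv, h.le]

lemma integrableOn_cpow_smul_sub (s : ℂ) :
    IntegrableOn (fun x : ℝ ↦ (x : ℂ) ^ (s - 1) • (P.f x - P.f₀)) (Ioi 1) := by
  have hconv : MellinConvergent P.f_modif s := (P.isStrongFEPair_toStrongFEPair.hasMellin s).1
  refine IntegrableOn.congr_fun (hconv.mono_set (Ioi_subset_Ioi zero_le_one)) (fun x hx ↦ ?_)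
    measurableSet_Ioi
  simp [WeakFEPair.f_modif, mem_Ioi.1 hx, (mem_Ioi.1 hx).le]

lemma cpow_smul_fePairTail (s : ℂ) :
    (fun x : ℝ ↦ (x : ℂ) ^ (s - 1) • fePairTail P x) =
      (Ioi 1).indicator fun x : ℝ ↦ (x : ℂ) ^ (s - 1) • (P.f x - P.f₀) :=
  (indicator_smul _ _ _).symm

lemma mellinConvergent_fePairTail (s : ℂ) : MellinConvergent (fePairTail P) s := by
  rw [MellinConvergent, cpow_smul_fePairTail]
  exact ((integrableOn_cpow_smul_sub P s).integrable_indicator measurableSet_Ioi).integrableOn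

lemma mellin_fePairTail (s : ℂ) :
    mellin (fePairTail P) s = ∫ x in Ioi (1 : ℝ), (x : ℂ) ^ (s - 1) • (P.f x - P.f₀) := by
  rw [mellin, cpow_smul_fePairTail, setIntegral_indicator measurableSet_Ioi,
    inter_eq_right.2 (Ioi_subset_Ioi zero_le_one)]

theorem weakFEPair_Λ₀_eq_integral_Ioi_one (s : ℂ) :
    P.Λ₀ s = ∫ x in Ioi (1 : ℝ), ((x : ℂ) ^ (s - 1) • (P.f x - P.f₀) +
      P.ε • (x : ℂ) ^ (P.k - s - 1) • (P.g x - P.g₀)) := by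
  let inverted (x : ℝ) : E := (x : ℂ) ^ (-P.k : ℂ) • fePairTail P.symm x⁻¹
  have hconv : MellinConvergent inverted s := by
    rw [MellinConvergent.cpow_smul, mellinConvergent_comp_inv]
    exact mellinConvergent_fePairTail P.symm _
  have hmellin : mellin inverted s = mellin (fePairTail P.symm) (P.k - s) := by
    rw [mellin_cpow_smul, mellin_comp_inv, neg_add_rev, neg_neg, sub_eq_add_neg]
  calc P.Λ₀ s = mellin (fun x ↦ fePairTail P x + P.ε • inverted x) s :=
        setIntegral_congr_fun measurableSet_Ioi fun x hx ↦ by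
          simp only [f_modif_eq_fePairTail_add_inv P hx, inverted]
    _ = mellin (fePairTail P) s + P.ε • mellin (fePairTail P.symm) (P.k - s) := by
        rw [(hasMellin_add (mellinConvergent_fePairTail P s) (hconv.const_smul P.ε)).2,
          mellin_const_smul, hmellin]
    _ = _ := by
        rw [mellin_fePairTail, mellin_fePairTail, ← integral_smul]
        exact (integral_add (integrableOn_cpow_smul_sub P s)
          ((integrableOn_cpow_smul_sub P.symm _).smul P.ε)).symm

end WeakFEPair

lemma cosKernel_zero_sub_one {x : ℝ} (hx : 0 < x) : cosKernel 0 x - 1 = 2 * jacobiPsi x := by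
  have hsum := hasSum_nat_cosKernel₀ 0 hx
  simp only [mul_zero, zero_mul, Real.cos_zero, mul_one, QuotientAddGroup.mk_zero] at hsum
  rw [jacobiPsi, ← tsum_mul_left, hsum.tsum_eq]

lemma hurwitzEvenFEPair_zero_g_sub {x : ℝ} (hx : 0 < x) :
    (hurwitzEvenFEPair 0).g x - (hurwitzEvenFEPair 0).g₀ = 2 * jacobiPsi x := by
  simp only [hurwitzEvenFEPair, Function.comp_apply]
  exact_mod_cast cosKernel_zero_sub_one hx

lemma hurwitzEvenFEPair_zero_f_sub {x : ℝ} (hx : 0 < x) :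
    (hurwitzEvenFEPair 0).f x - (hurwitzEvenFEPair 0).f₀ = 2 * jacobiPsi x := by
  rw [← WeakFEPair.symm_g, ← WeakFEPair.symm_g₀, hurwitzEvenFEPair_zero_symm]
  exact hurwitzEvenFEPair_zero_g_sub hx

theorem completedRiemannZeta₀_eq_integral_jacobiPsi (s : ℂ) :
    completedRiemannZeta₀ s = ∫ x in Ioi (1 : ℝ),
      (jacobiPsi x : ℂ) * ((x : ℂ) ^ (s / 2 - 1) + (x : ℂ) ^ ((1 - s) / 2 - 1)) := by
  rw [completedRiemannZeta₀, completedHurwitzZetaEven₀, weakFEPair_Λ₀_eq_integral_Ioi_one,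
    ← integral_div]
  refine setIntegral_congr_fun measurableSet_Ioi fun x hx ↦ ?_
  have hx0 : 0 < x := one_pos.trans hx
  have hexp : ((hurwitzEvenFEPair 0).k : ℂ) - s / 2 - 1 = (1 - s) / 2 - 1 := by
    simp only [hurwitzEvenFEPair, Complex.ofReal_div, Complex.ofReal_one, Complex.ofReal_ofNat]
    ring
  have hε : (hurwitzEvenFEPair 0).ε = 1 := rfl
  simp only [hurwitzEvenFEPair_zero_f_sub hx0, hurwitzEvenFEPair_zero_g_sub hx0, hexp, hε,
    smul_eq_mul]
  ring

lemma ne_zero_of_Gammaℝ_ne_zero {s : ℂ} (hs : Complex.Gammaℝ s ≠ 0) : s ≠ 0 := by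
  rintro rfl
  exact hs (Complex.Gammaℝ_eq_zero_iff.2 ⟨0, by simp⟩)

lemma riemannXiFun_eq_mul_completedRiemannZeta {s : ℂ} (hs : Complex.Gammaℝ s ≠ 0) :
    riemannXiFun s = 1 / 2 * s * (s - 1) * completedRiemannZeta s := by
  have hs0 : s ≠ 0 := ne_zero_of_Gammaℝ_ne_zero hs
  rw [riemannXiFun, mul_assoc _ _ (Complex.Gamma _), ← Complex.Gammaℝ_def, mul_assoc,
    riemannZeta_def_of_ne_zero hs0, mul_div_cancel₀ _ hs]

lemma riemannXiFun_eq_half_add_mul_completedRiemannZeta₀ {s : ℂ} (hs : Complex.Gammaℝ s ≠ 0)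
    (hs1 : s ≠ 1) :
    riemannXiFun s = 1 / 2 + 1 / 2 * s * (s - 1) * completedRiemannZeta₀ s := by
  have hs0 : s ≠ 0 := ne_zero_of_Gammaℝ_ne_zero hs
  have hs1' : 1 - s ≠ 0 := sub_ne_zero.2 hs1.symm
  rw [riemannXiFun_eq_mul_completedRiemannZeta hs, completedRiemannZeta_eq]
  field_simp
  ring

lemma ofReal_cpow_add_mul_I_add_cpow_sub_mul_I {x : ℝ} (hx : 0 < x) (a z : ℂ) :
    (x : ℂ) ^ (a + z * I) + (x : ℂ) ^ (a - z * I) =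
      2 * ((x : ℂ) ^ a * Complex.cos (z * Real.log x)) := by
  have hx0 : (x : ℂ) ≠ 0 := Complex.ofReal_ne_zero.2 hx.ne'
  have hexp (w : ℂ) : (x : ℂ) ^ w = Complex.exp (Real.log x * w) := by
    rw [Complex.cpow_def_of_ne_zero hx0, Complex.ofReal_log hx.le]
  rw [mul_left_comm, Complex.two_cos, sub_eq_add_neg, Complex.cpow_add _ _ hx0,
    Complex.cpow_add _ _ hx0, hexp (z * I), hexp (-(z * I)), ← mul_add]
  ring_nf

theorem completedRiemannZeta₀_half_add_mul_I (t : ℂ) :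
    completedRiemannZeta₀ (1 / 2 + t * I) =
      2 * ∫ x in Ioi (1 : ℝ), (jacobiPsi x : ℂ) * (x : ℂ) ^ (-(3 : ℂ) / 4) *
        Complex.cos (t / 2 * Real.log x) := by
  rw [completedRiemannZeta₀_eq_integral_jacobiPsi, ← integral_const_mul]
  refine setIntegral_congr_fun measurableSet_Ioi fun x hx ↦ ?_
  have hleft : (1 / 2 + t * I) / 2 - 1 = -3 / 4 + t / 2 * I := by ring
  have hright : (1 - (1 / 2 + t * I)) / 2 - 1 = -3 / 4 - t / 2 * I := by ring
  simp only [hleft, hright, ofReal_cpow_add_mul_I_add_cpow_sub_mul_I (one_pos.trans hx)]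
  ring

lemma integral_jacobiPsi_mul_cos_ofReal (t : ℝ) :
    ∫ x in Ioi (1 : ℝ),
        (jacobiPsi x : ℂ) * (x : ℂ) ^ (-(3 : ℂ) / 4) * Complex.cos (t / 2 * Real.log x) =
      ((∫ x in Ioi (1 : ℝ), jacobiPsi x * x ^ (-(3 : ℝ) / 4) *
        Real.cos (t / 2 * Real.log x) : ℝ) : ℂ) := by
  rw [← integral_complex_ofReal]
  refine setIntegral_congr_fun measurableSet_Ioi fun x hx ↦ ?_
  have hx0 : 0 ≤ x := (one_pos.trans hx).le
  push_cast [Complex.ofReal_cpow hx0]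
  rfl

theorem riemannXiFun_critical_line_general {t : ℂ} (hΓ : Complex.Gammaℝ (1 / 2 + t * I) ≠ 0)
    (ht : 1 / 2 + t * I ≠ 1) :
    riemannXiFun (1 / 2 + t * I) =
      1 / 2 - (t ^ 2 + 1 / 4) * ∫ x in Ioi (1 : ℝ),
        (jacobiPsi x : ℂ) * (x : ℂ) ^ (-(3 : ℂ) / 4) * Complex.cos (t / 2 * Real.log x) := by
  rw [riemannXiFun_eq_half_add_mul_completedRiemannZeta₀ hΓ ht,
    completedRiemannZeta₀_half_add_mul_I]
  have hpoly : (1 / 2 + t * I) * (1 / 2 + t * I - 1) = -(t ^ 2 + 1 / 4) := by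
    linear_combination t ^ 2 * I_sq
  linear_combination (∫ x in Ioi (1 : ℝ),
    (jacobiPsi x : ℂ) * (x : ℂ) ^ (-(3 : ℂ) / 4) * Complex.cos (t / 2 * Real.log x)) * hpoly

/-- On the critical line,
`ξ(1/2 + it) = 1/2 - (t² + 1/4) ∫_1^∞ ψ(x) x^(-3/4) cos((t/2) log x) dx`;
in particular `ξ(1/2 + it)` is real. -/
theorem riemannXiFun_critical_line (t : ℝ) :
    riemannXiFun (1 / 2 + t * Complex.I) =
      1 / 2 - ((t ^ 2 + 1 / 4 : ℝ) : ℂ) *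
        ((∫ x in Ioi (1 : ℝ), jacobiPsi x * x ^ (-(3 : ℝ) / 4) *
          Real.cos (t / 2 * Real.log x) : ℝ) : ℂ) ∧
    (riemannXiFun (1 / 2 + t * Complex.I)).im = 0 := by
  have hre : (1 / 2 + t * I : ℂ).re = 1 / 2 := by simp
  have hΓ : Complex.Gammaℝ (1 / 2 + t * I) ≠ 0 :=
    Complex.Gammaℝ_ne_zero_of_re_pos (hre ▸ one_half_pos)
  have hone : 1 / 2 + t * I ≠ 1 := fun h ↦ by norm_num [h] at hre
  have hcast : (t : ℂ) ^ 2 + 1 / 4 = ((t ^ 2 + 1 / 4 : ℝ) : ℂ) := by push_cast; rfl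
  rw [riemannXiFun_critical_line_general hΓ hone, integral_jacobiPsi_mul_cos_ofReal, hcast]
  refine ⟨rfl, ?_⟩
  simp [← Complex.ofReal_mul, -Complex.ofReal_add]
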